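/- Let $K$ be a field, let $n \ge 2$, and let $p(x) = x^n + a_{n-1}x^{n-1} + \cdots + a_1 x + a_0 \in K[x]$ be a monic separable irreducible polynomial of degree $n$. Let $L$ be a splitting field of $p$ over $K$ and let $\alpha_1,\dots,\alpha_n \in L$ be the (distinct) roots of $p$. Let $e_k$ denote the $k$-th elementary symmetric polynomial in $n$ variables. Define polynomials $\hat G_1,\dots,\hat G_n \in L[x_0,\dots,x_{n-1}]$ by $\hat G_k = (-1)^k\, e_k(\beta_1(\bar x),\dots,\beta_n(\bar x))$, where $\beta_i(\bar x) = x_0 + x_1\alpha_i + \cdots + x_{n-1}\alpha_i^{n-1}$. Then: (1) for each $1 \le k \le n$, $\hat G_k$ evaluated at the point $(0,1,0,\dots,0) \in L^n$ equals the image in $L$ of $a_{n-k}$; and (2) the $n\times n$ matrix whose $(k,j)$ entry ($1 \le k \le n$, $0 \le j \le n-1$) is the formal partial derivative $\partial \hat G_k/\partial x_j$ evaluated at $(0,1,0,\dots,0)$ has nonzero determinant. -/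

import Mathlib

open Polynomial

noncomputable section

/-- The linear form `β_i = x₀ + x₁ α_i + ⋯ + x_{n-1} α_i^{n-1}` in `L[x₀, …, x_{n-1}]`. -/
def betaForm {L : Type*} [Field L] {n : ℕ} (α : Fin n → L) (i : Fin n) :
    MvPolynomial (Fin n) L :=
  ∑ j : Fin n, MvPolynomial.C (α i ^ (j : ℕ)) * MvPolynomial.X j

/-- The polynomial `Ĝ_k = (-1)^k e_k(β₁, …, βₙ)` in `L[x₀, …, x_{n-1}]`. -/
def GHat {L : Type*} [Field L] {n : ℕ} (α : Fin n → L) (k : ℕ) :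
    MvPolynomial (Fin n) L :=
  (-1) ^ k * MvPolynomial.aeval (betaForm α) (MvPolynomial.esymm (Fin n) L k)

/-- The matrix whose rows are indexed by `Ĝ₁, …, Ĝₙ` (row `k : Fin n` belongs to `Ĝ_{k+1}`),
whose columns are indexed by `x₀, …, x_{n-1}`, and whose entries are the partial derivatives
`∂Ĝ_{k+1}/∂x_j` evaluated at `b`. -/
def jacobianGHat {L : Type*} [Field L] {n : ℕ} (α : Fin n → L) (b : Fin n → L) :
    Matrix (Fin n) (Fin n) L :=
  Matrix.of fun k j => MvPolynomial.eval b (MvPolynomial.pderiv j (GHat α ((k : ℕ) + 1)))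

end

/-- At `(0, 1, 0, …, 0)` the linear form `β_i` takes the value `α_i`. -/
theorem eval_betaForm_single {L : Type*} [Field L] {n : ℕ} (hn : 2 ≤ n) (α : Fin n → L)
    (i : Fin n) :
    MvPolynomial.eval (Pi.single (⟨1, hn⟩ : Fin n) (1 : L)) (betaForm α i) = α i := by
  simp [betaForm, Pi.single_apply]

theorem pderiv_betaForm {L : Type*} [Field L] {n : ℕ} (α : Fin n → L) (i j : Fin n) :
    MvPolynomial.pderiv j (betaForm α i) = MvPolynomial.C (α i ^ (j : ℕ)) := by
  simp [betaForm, MvPolynomial.pderiv_X, Pi.single_apply]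

theorem GHat_zero {L : Type*} [Field L] {n : ℕ} (α : Fin n → L) : GHat α 0 = 1 := by
  simp [GHat]

/-- The `Ĝ_k` are the coefficients of `∏ᵢ (T - β_i)`. -/
theorem sum_GHat_mul_pow {L : Type*} [Field L] {n : ℕ} (α : Fin n → L)
    (t : MvPolynomial (Fin n) L) :
    ∑ k ∈ Finset.range (n + 1), GHat α k * t ^ (n - k) = ∏ i, (t - betaForm α i) := by
  have h := congrArg (Polynomial.eval t)
    (Multiset.prod_X_sub_X_eq_sum_esymm (Finset.univ.val.map (betaForm α)))
  simp only [Multiset.map_map, Multiset.card_map, Finset.card_val, Finset.card_univ,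
    Fintype.card_fin, Polynomial.eval_finsetSum, ← MvPolynomial.aeval_esymm_eq_multiset_esymm
      (Fin n) L] at h
  have h' : ((Finset.univ.val.map ((fun s => X - C s) ∘ betaForm α)).prod).eval t =
      ∏ i, (t - betaForm α i) := by
    change (∏ i, (X - C (betaForm α i))).eval t = _
    simp [Polynomial.eval_prod]
  rw [← h', h]
  refine Finset.sum_congr rfl fun k _ => ?_
  simp [GHat, mul_assoc]

/-- Evaluating at the root `α_m` the polynomial with coefficients `∂Ĝ_k/∂x_j` yields, up to sign,
`α_m ^ j` times the derivative of `∏ᵢ (T - α_i)` at `α_m`. -/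
theorem sum_pow_mul_jacobianGHat {L : Type*} [Field L] {n : ℕ} (hn : 2 ≤ n) (α : Fin n → L)
    (m j : Fin n) :
    ∑ k : Fin n, α m ^ (n - (k + 1 : ℕ)) *
        jacobianGHat α (Pi.single (⟨1, hn⟩ : Fin n) (1 : L)) k j =
      -(∏ i ∈ Finset.univ.erase m, (α m - α i)) * α m ^ (j : ℕ) := by
  have h := congrArg (fun q => MvPolynomial.eval (Pi.single (⟨1, hn⟩ : Fin n) (1 : L))
    (MvPolynomial.pderiv j q)) (sum_GHat_mul_pow α (MvPolynomial.C (α m)))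
  simp only [← Finset.mul_prod_erase _ _ (Finset.mem_univ m), Finset.sum_range_succ', GHat_zero,
    ← map_pow, map_add, map_sum, Derivation.leibniz, map_sub, map_prod, map_neg,
    MvPolynomial.pderiv_C, pderiv_betaForm, eval_betaForm_single, smul_eq_mul, map_mul,
    MvPolynomial.eval_C, sub_self, zero_mul, mul_zero, zero_add, zero_sub,
    Derivation.map_one_eq_zero, add_zero, mul_neg, Finset.sum_range] at h
  rw [neg_mul, ← h]
  rfl

theorem det_jacobianGHat_ne_zero {L : Type*} [Field L] {n : ℕ} (hn : 2 ≤ n) {α : Fin n → L}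
    (hα : Function.Injective α) :
    (jacobianGHat α (Pi.single (⟨1, hn⟩ : Fin n) (1 : L))).det ≠ 0 := by
  have h : Matrix.of (fun m k : Fin n => α m ^ (n - (k + 1 : ℕ))) *
      jacobianGHat α (Pi.single (⟨1, hn⟩ : Fin n) (1 : L)) =
      Matrix.diagonal (fun m => -(∏ i ∈ Finset.univ.erase m, (α m - α i))) *
        Matrix.vandermonde α := by
    ext m j
    rw [Matrix.mul_apply, Matrix.diagonal_mul, Matrix.vandermonde_apply]
    exact sum_pow_mul_jacobianGHat hn α m j
  apply_fun Matrix.det at h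
  rw [Matrix.det_mul, Matrix.det_mul, Matrix.det_diagonal] at h
  refine right_ne_zero_of_mul (h.trans_ne (mul_ne_zero ?_ (Matrix.det_vandermonde_ne_zero_iff.2 hα)))
  refine Finset.prod_ne_zero_iff.2 fun m _ => neg_ne_zero.2 (Finset.prod_ne_zero_iff.2 fun i hi => ?_)
  exact sub_ne_zero.2 (hα.ne (Finset.ne_of_mem_erase hi).symm)

theorem eval_GHat_single {L : Type*} [Field L] {n : ℕ} (hn : 2 ≤ n) (α : Fin n → L) (k : ℕ) :
    MvPolynomial.eval (Pi.single (⟨1, hn⟩ : Fin n) (1 : L)) (GHat α k) =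
      (-1) ^ k * (Finset.univ.val.map α).esymm k := by
  simp only [GHat, MvPolynomial.aeval_esymm_eq_multiset_esymm, Finset.esymm_map_val, map_mul,
    map_pow, map_neg, map_one, map_sum, map_prod, eval_betaForm_single]

/-- An injective enumeration of the root set of a separable polynomial enumerates its multiset
of roots. -/
theorem map_univ_eq_aroots {K L : Type*} [Field K] [Field L] [Algebra K L] {n : ℕ} {p : K[X]}
    (hp_sep : p.Separable) {α : Fin n → L} (hα : Function.Injective α)
    (hα_roots : Set.range α = p.rootSet L) : Finset.univ.val.map α = p.aroots L := by
  refine (Multiset.Nodup.ext (Finset.univ.nodup.map hα) (nodup_roots hp_sep.map)).2 fun x => ?_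
  have h : x ∈ Set.range α ↔ x ∈ p.rootSet L := by rw [hα_roots]
  rw [mem_rootSet, ← mem_aroots] at h
  simpa using h

/-- `α` enumerates the distinct roots of `p` in its splitting field `L`; the point
`(0, 1, 0, …, 0)`, which has a coordinate of index `1` because `2 ≤ n`, is
`Pi.single ⟨1, hn⟩ 1`. -/
theorem stmt_4 {K L : Type*} [Field K] [Field L] [Algebra K L]
    (n : ℕ) (hn : 2 ≤ n) (p : K[X]) (hp_monic : p.Monic) (hp_sep : p.Separable)
    (hp_irr : Irreducible p) (hp_deg : p.natDegree = n) [IsSplittingField K L p]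
    (α : Fin n → L) (hα : Function.Injective α) (hα_roots : Set.range α = p.rootSet L) :
    (∀ k : ℕ, 1 ≤ k → k ≤ n →
      MvPolynomial.eval (Pi.single (⟨1, hn⟩ : Fin n) (1 : L)) (GHat α k) =
        algebraMap K L (p.coeff (n - k))) ∧
    (jacobianGHat α (Pi.single (⟨1, hn⟩ : Fin n) (1 : L))).det ≠ 0 := by
  refine ⟨fun k _ hk => ?_, det_jacobianGHat_ne_zero hn hα⟩
  have hsplit : (p.map (algebraMap K L)).Splits := IsSplittingField.splits L p
  have hdeg : (p.map (algebraMap K L)).natDegree = n := by rw [natDegree_map, hp_deg]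
  rw [eval_GHat_single, map_univ_eq_aroots hp_sep hα hα_roots, ← coeff_map,
    coeff_eq_esymm_roots_of_splits hsplit (by omega), hdeg, Nat.sub_sub_self hk,
    (hp_monic.map _).leadingCoeff, one_mul]
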